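/- Let M be a (2n+1)-dimensional almost Kenmotsu manifold and V a vector field such that (£_V ∇)(X,Y) = 2β[g(X,Y) - η(X)η(Y) + g(h'X,Y)]ξ for all vector fields X, Y, with β a constant. Then (£_V ∇)(X,ξ) = 0, and moreover (∇_Y £_V ∇)(X,ξ) = -2β[g(X,Y) - η(X)η(Y) + 2g(h'X,Y) + g(h'²X,Y)]ξ for all vector fields X, Y. -/

import Mathlib

/-!
Abstract framework for almost Kenmotsu geometry.

`SF` plays the role of the ring `C^∞(M)` of smooth functions on a manifold `M`
(a commutative `ℝ`-algebra; real constants are embedded via `algebraMap ℝ SF`),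
and `VF` plays the role of the `C^∞(M)`-module of smooth vector fields on `M`.
The structure `AlmostKenmotsuMfld n` packages a `(2n+1)`-dimensional almost
Kenmotsu manifold: the almost contact metric structure `(φ, ξ, η, g)` with its
defining identities, the Lie bracket, the action of vector fields on functions,
the Levi-Civita connection `∇`, the tensors `h = (1/2)£_ξ φ` and `h' = h ∘ φ`,
the scalar curvature, and the almost Kenmotsu conditions (`dη = 0` together
with the characteristic identity `∇_X ξ = X - η(X)ξ - φhX`).  The dimension
`2n+1` is encoded by an orthonormal frame.
-/

structure AlmostKenmotsuMfld (n : ℕ) where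
  /-- the ring of smooth functions on `M` -/
  SF : Type
  /-- the module of smooth vector fields on `M` -/
  VF : Type
  [sfRing : CommRing SF]
  [sfAlg : Algebra ℝ SF]
  [vfGroup : AddCommGroup VF]
  [vfMod : Module SF VF]
  /-- the Riemannian metric `g` -/
  g : VF → VF → SF
  /-- the `(1,1)`-tensor field `φ` -/
  phi : VF → VF
  /-- the characteristic (Reeb) vector field `ξ` -/
  xi : VF
  /-- the `1`-form `η` -/
  eta : VF → SF
  /-- the Levi-Civita connection `∇` -/
  nabla : VF → VF → VF
  /-- the Lie bracket `[X,Y]` of vector fields -/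
  bracket : VF → VF → VF
  /-- the action `X(f)` of a vector field on a function -/
  act : VF → SF → SF
  /-- the tensor `h = (1/2) £_ξ φ` -/
  h : VF → VF
  /-- the tensor `h' = h ∘ φ` -/
  h' : VF → VF
  /-- the scalar curvature `r` -/
  scal : SF
  /-- an orthonormal frame; it encodes that `M` is `(2n+1)`-dimensional -/
  frame : Fin (2 * n + 1) → VF
  -- the metric
  g_symm : ∀ X Y, g X Y = g Y X
  g_add_left : ∀ X Y Z, g (X + Y) Z = g X Z + g Y Z
  g_smul_left : ∀ (f : SF) (X Y : VF), g (f • X) Y = f * g X Y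
  frame_ortho : ∀ i j, g (frame i) (frame j) = if i = j then 1 else 0
  frame_complete : ∀ X Y, g X Y = ∑ i, g X (frame i) * g (frame i) Y
  -- the almost contact metric structure
  phi_phi : ∀ X, phi (phi X) = -X + eta X • xi
  eta_xi : eta xi = 1
  phi_xi : phi xi = 0
  eta_phi : ∀ X, eta (phi X) = 0
  g_phi_phi : ∀ X Y, g (phi X) (phi Y) = g X Y - eta X * eta Y
  eta_eq : ∀ X, eta X = g X xi
  -- vector fields act as derivations on functions
  act_add : ∀ X f₁ f₂, act X (f₁ + f₂) = act X f₁ + act X f₂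
  act_mul : ∀ X f₁ f₂, act X (f₁ * f₂) = act X f₁ * f₂ + f₁ * act X f₂
  act_const : ∀ X (c : ℝ), act X (algebraMap ℝ SF c) = 0
  act_add_left : ∀ X Y f, act (X + Y) f = act X f + act Y f
  act_smul_left : ∀ (f₁ : SF) X f, act (f₁ • X) f = f₁ * act X f
  -- the Levi-Civita connection
  nabla_add_left : ∀ X Y Z, nabla (X + Y) Z = nabla X Z + nabla Y Z
  nabla_add_right : ∀ X Y Z, nabla X (Y + Z) = nabla X Y + nabla X Z
  nabla_smul_left : ∀ (f : SF) (X Y : VF), nabla (f • X) Y = f • nabla X Y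
  nabla_leibniz : ∀ (f : SF) (X Y : VF), nabla X (f • Y) = act X f • Y + f • nabla X Y
  nabla_metric : ∀ X Y Z, act X (g Y Z) = g (nabla X Y) Z + g Y (nabla X Z)
  torsion_free : ∀ X Y, nabla X Y - nabla Y X = bracket X Y
  -- the tensors `h` and `h'`
  h_def : ∀ X, (2 : SF) • h X = bracket xi (phi X) - phi (bracket xi X)
  h'_def : ∀ X, h' X = h (phi X)
  -- almost Kenmotsu conditions: `dη = 0` and `∇_X ξ = X - η(X)ξ - φhX`
  d_eta : ∀ X Y, act X (eta Y) - act Y (eta X) - eta (bracket X Y) = 0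
  nabla_xi : ∀ X, nabla X xi = X - eta X • xi - phi (h X)

attribute [instance] AlmostKenmotsuMfld.sfRing AlmostKenmotsuMfld.sfAlg
  AlmostKenmotsuMfld.vfGroup AlmostKenmotsuMfld.vfMod

namespace AlmostKenmotsuMfld

variable {n : ℕ} (S : AlmostKenmotsuMfld n)

/-- The Riemann curvature tensor `R(X,Y)Z`. -/
def R (X Y Z : S.VF) : S.VF :=
  S.nabla X (S.nabla Y Z) - S.nabla Y (S.nabla X Z) - S.nabla (S.bracket X Y) Z

/-- The Lie derivative `(£_V g)(X,Y)` of the metric. -/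
def lieg (V X Y : S.VF) : S.SF :=
  S.act V (S.g X Y) - S.g (S.bracket V X) Y - S.g X (S.bracket V Y)

/-- The Lie derivative `(£_V η)(X)` of the `1`-form `η`. -/
def lieEta (V X : S.VF) : S.SF :=
  S.act V (S.eta X) - S.eta (S.bracket V X)

/-- The Lie derivative `(£_V h')(X)` of the `(1,1)`-tensor `h'`. -/
def lieH' (V X : S.VF) : S.VF :=
  S.bracket V (S.h' X) - S.h' (S.bracket V X)

/-- The Lie derivative `(£_V ∇)(X,Y)` of the Levi-Civita connection. -/
def lieNabla (V X Y : S.VF) : S.VF :=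
  S.bracket V (S.nabla X Y) - S.nabla (S.bracket V X) Y - S.nabla X (S.bracket V Y)

/-- The Lie derivative `(£_V R)(X,Y)Z` of the curvature tensor. -/
def lieR (V X Y Z : S.VF) : S.VF :=
  S.bracket V (S.R X Y Z) - S.R (S.bracket V X) Y Z - S.R X (S.bracket V Y) Z
    - S.R X Y (S.bracket V Z)

/-- The covariant derivative `(∇_Z £_V ∇)(X,Y)` of the `(1,2)`-tensor `£_V ∇`. -/
def nablaLieNabla (V Z X Y : S.VF) : S.VF :=
  S.nabla Z (S.lieNabla V X Y) - S.lieNabla V (S.nabla Z X) Y - S.lieNabla V X (S.nabla Z Y)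

/-- `(g,V,λ,α)` is a quasi Yamabe soliton:
`(1/2)(£_V g)(X,Y) = (r - λ) g(X,Y) + α V♯(X) V♯(Y)`, where `V♯(X) = g(V,X)`,
`r` is the scalar curvature, `λ` a real constant and `α` a smooth function. -/
def IsQuasiYamabeSoliton (V : S.VF) (lam : ℝ) (alpha : S.SF) : Prop :=
  ∀ X Y, (1 / 2 : ℝ) • S.lieg V X Y
    = (S.scal - algebraMap ℝ S.SF lam) * S.g X Y + alpha * S.g V X * S.g V Y

/-- `ξ` belongs to the `(k,μ)'`-nullity distribution, i.e. `M` is a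
`(k,μ)'`-almost Kenmotsu manifold:
`R(X,Y)ξ = k[η(Y)X - η(X)Y] + μ[η(Y)h'X - η(X)h'Y]`. -/
def IsKMPrime (k μ : ℝ) : Prop :=
  ∀ X Y, S.R X Y S.xi
    = algebraMap ℝ S.SF k • (S.eta Y • X - S.eta X • Y)
      + algebraMap ℝ S.SF μ • (S.eta Y • S.h' X - S.eta X • S.h' Y)

end AlmostKenmotsuMfld

/-!
Since `dη = 0`, the endomorphism `Y ↦ ∇_Y ξ` is self-adjoint, and `φh = -h'`, so that
`g(X, ∇_Y ξ) = g(X,Y) - η(X)η(Y) + g(h'X,Y)`. This is the form occurring in the hypothesis, and it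
vanishes at `Y = ξ`. Hence `(£_V ∇)(·, ξ) = 0`, so that differentiating only hits the argument `ξ`:
`(∇_Y £_V ∇)(X,ξ) = -(£_V ∇)(X, ∇_Y ξ)`. Inserting the formula for `g(·, ∇_Y ξ)` at `X` and at
`h'X` gives the result.
-/

namespace AlmostKenmotsuMfld

variable {n : ℕ} (S : AlmostKenmotsuMfld n)

theorem g_add_right (X Y Z : S.VF) : S.g X (Y + Z) = S.g X Y + S.g X Z := by
  simp only [S.g_symm X, S.g_add_left]

theorem g_smul_right (f : S.SF) (X Y : S.VF) : S.g X (f • Y) = f * S.g X Y := by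
  simp only [S.g_symm X, S.g_smul_left]

/-- The Riemannian metric `g` as a bilinear form over the smooth functions; it makes Mathlib's
lemmas on bilinear maps available for `g`. -/
def metricForm : LinearMap.BilinForm S.SF S.VF :=
  LinearMap.mk₂ S.SF S.g S.g_add_left S.g_smul_left S.g_add_right S.g_smul_right

theorem g_neg_left (X Y : S.VF) : S.g (-X) Y = -S.g X Y :=
  S.metricForm.map_neg₂ X Y

theorem g_neg_right (X Y : S.VF) : S.g X (-Y) = -S.g X Y :=
  map_neg (S.metricForm X) Y

theorem g_sub_left (X Y Z : S.VF) : S.g (X - Y) Z = S.g X Z - S.g Y Z :=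
  S.metricForm.map_sub₂ X Y Z

theorem g_xi_left (X : S.VF) : S.g S.xi X = S.eta X := by
  rw [S.eta_eq, S.g_symm]

theorem eta_sub (X Y : S.VF) : S.eta (X - Y) = S.eta X - S.eta Y := by
  simp only [S.eta_eq, g_sub_left]

theorem eta_smul (f : S.SF) (X : S.VF) : S.eta (f • X) = f * S.eta X := by
  simp only [S.eta_eq, S.g_smul_left]

theorem isUnit_two : IsUnit (2 : S.SF) := by
  rw [← map_ofNat (algebraMap ℝ S.SF) 2]
  exact (IsUnit.mk0 (2 : ℝ) two_ne_zero).map (algebraMap ℝ S.SF)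

theorem act_zero (X : S.VF) : S.act X 0 = 0 := by
  simpa using S.act_const X 0

theorem act_one (X : S.VF) : S.act X 1 = 0 := by
  simpa using S.act_const X 1

theorem nabla_zero_right (X : S.VF) : S.nabla X 0 = 0 := by
  simpa using S.nabla_add_right X 0 0

theorem bracket_self (X : S.VF) : S.bracket X X = 0 := by
  rw [← S.torsion_free, sub_self]

theorem bracket_add_right (X Y Z : S.VF) :
    S.bracket X (Y + Z) = S.bracket X Y + S.bracket X Z := by
  simp only [← S.torsion_free, S.nabla_add_right, S.nabla_add_left]
  abel

theorem bracket_neg_right (X Y : S.VF) : S.bracket X (-Y) = -S.bracket X Y :=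
  map_neg (AddMonoidHom.mk' (S.bracket X) (S.bracket_add_right X)) Y

theorem bracket_smul_right (f : S.SF) (X Y : S.VF) :
    S.bracket X (f • Y) = S.act X f • Y + f • S.bracket X Y := by
  simp only [← S.torsion_free, S.nabla_leibniz, S.nabla_smul_left, smul_sub]
  abel

theorem eta_bracket_xi (X : S.VF) : S.eta (S.bracket S.xi X) = S.act S.xi (S.eta X) := by
  have closed := S.d_eta S.xi X
  rw [S.eta_xi, act_one] at closed
  linear_combination -closed

theorem bracket_xi_phi_phi (X : S.VF) :
    S.bracket S.xi (S.phi (S.phi X))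
      = -S.bracket S.xi X + S.eta (S.bracket S.xi X) • S.xi := by
  rw [S.phi_phi, bracket_add_right, bracket_neg_right, bracket_smul_right, bracket_self,
    smul_zero, add_zero, eta_bracket_xi]

theorem g_phi_left (X Y : S.VF) : S.g (S.phi X) Y = -S.g X (S.phi Y) := by
  have compat := S.g_phi_phi X (S.phi Y)
  rw [S.phi_phi, S.eta_phi, g_add_right, g_neg_right, g_smul_right, ← S.eta_eq,
    S.eta_phi] at compat
  linear_combination -compat

theorem eta_h (X : S.VF) : S.eta (S.h X) = 0 := by
  refine S.isUnit_two.mul_left_cancel ?_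
  rw [← eta_smul, S.h_def, eta_sub, eta_bracket_xi, S.eta_phi, S.eta_phi, act_zero, sub_zero,
    mul_zero]

theorem eta_h' (X : S.VF) : S.eta (S.h' X) = 0 := by
  rw [S.h'_def, eta_h]

-- The identity `h' = -φh`, paired with `g` because the structure contains neither the linearity of
-- `φ` nor the nondegeneracy of `g`.
theorem g_h'_left (X Y : S.VF) : S.g (S.h' X) Y = -S.g (S.phi (S.h X)) Y := by
  have two_h' : 2 * S.g (S.h' X) Y
      = -S.g (S.bracket S.xi X) Y + S.eta (S.bracket S.xi X) * S.eta Y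
        + S.g (S.bracket S.xi (S.phi X)) (S.phi Y) := by
    rw [S.h'_def, ← S.g_smul_left, S.h_def, bracket_xi_phi_phi, g_sub_left, S.g_add_left,
      g_neg_left, S.g_smul_left, g_xi_left, g_phi_left, sub_neg_eq_add]
  have two_h : 2 * S.g (S.h X) (S.phi Y)
      = S.g (S.bracket S.xi (S.phi X)) (S.phi Y)
        - (S.g (S.bracket S.xi X) Y - S.eta (S.bracket S.xi X) * S.eta Y) := by
    rw [← S.g_smul_left, S.h_def, g_sub_left, S.g_phi_phi]
  refine S.isUnit_two.mul_left_cancel ?_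
  rw [g_phi_left, neg_neg]
  linear_combination two_h' - two_h

theorem g_nabla_xi_comm (X Y : S.VF) : S.g (S.nabla X S.xi) Y = S.g X (S.nabla Y S.xi) := by
  have closed := S.d_eta X Y
  rw [← S.torsion_free, eta_sub] at closed
  simp only [S.eta_eq, S.nabla_metric] at closed
  rw [S.g_symm]
  linear_combination closed

theorem g_nabla_xi_right (X Y : S.VF) :
    S.g X (S.nabla Y S.xi) = S.g X Y - S.eta X * S.eta Y + S.g (S.h' X) Y := by
  rw [← g_nabla_xi_comm, S.nabla_xi, g_sub_left, g_sub_left, S.g_smul_left, g_xi_left, g_h'_left,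
    sub_eq_add_neg _ (S.g (S.phi (S.h X)) Y)]

theorem eta_nabla_xi (X : S.VF) : S.eta (S.nabla X S.xi) = 0 := by
  rw [S.nabla_xi, eta_sub, eta_sub, eta_smul, S.eta_xi, S.eta_phi, mul_one, sub_self, sub_zero]

theorem nablaLieNabla_eq_neg_of_lieNabla_eq_zero {V Z : S.VF}
    (hZ : ∀ X, S.lieNabla V X Z = 0) (X Y : S.VF) :
    S.nablaLieNabla V Y X Z = -S.lieNabla V X (S.nabla Y Z) := by
  rw [nablaLieNabla, hZ, hZ, nabla_zero_right, sub_zero, zero_sub]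

end AlmostKenmotsuMfld

theorem nablaLieNabla_of_lieNabla_eq_general
    {n : ℕ} (S : AlmostKenmotsuMfld n) (V W : S.VF)
    (hyp : ∀ X Y, S.lieNabla V X Y
      = (S.g X Y - S.eta X * S.eta Y + S.g (S.h' X) Y) • W) :
    (∀ X, S.lieNabla V X S.xi = 0) ∧
    (∀ X Y, S.nablaLieNabla V Y X S.xi
      = -((S.g X Y - S.eta X * S.eta Y + 2 * S.g (S.h' X) Y + S.g (S.h' (S.h' X)) Y) • W)) := by
  have lieNabla_xi (X : S.VF) : S.lieNabla V X S.xi = 0 := by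
    rw [hyp, ← S.eta_eq, ← S.eta_eq, S.eta_xi, S.eta_h', mul_one, sub_self, add_zero, zero_smul]
  refine ⟨lieNabla_xi, fun X Y => ?_⟩
  rw [S.nablaLieNabla_eq_neg_of_lieNabla_eq_zero lieNabla_xi, hyp, S.eta_nabla_xi,
    S.g_nabla_xi_right, S.g_nabla_xi_right, S.eta_h']
  congr 2
  ring

/-- On a `(2n+1)`-dimensional almost Kenmotsu manifold, if a vector field `V` satisfies
`(£_V ∇)(X,Y) = 2β[g(X,Y) - η(X)η(Y) + g(h'X,Y)]ξ` for a constant `β`, then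
`(£_V ∇)(X,ξ) = 0` and
`(∇_Y £_V ∇)(X,ξ) = -2β[g(X,Y) - η(X)η(Y) + 2g(h'X,Y) + g(h'²X,Y)]ξ`
for all vector fields `X, Y`. -/
theorem nablaLieNabla_of_lieNabla_eq
    {n : ℕ} (S : AlmostKenmotsuMfld n) (V : S.VF) (beta : ℝ)
    (hyp : ∀ X Y, S.lieNabla V X Y
      = (algebraMap ℝ S.SF (2 * beta)
          * (S.g X Y - S.eta X * S.eta Y + S.g (S.h' X) Y)) • S.xi) :
    (∀ X, S.lieNabla V X S.xi = 0) ∧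
    (∀ X Y, S.nablaLieNabla V Y X S.xi
      = -((algebraMap ℝ S.SF (2 * beta)
          * (S.g X Y - S.eta X * S.eta Y + (2 : S.SF) * S.g (S.h' X) Y
              + S.g (S.h' (S.h' X)) Y)) • S.xi)) := by
  simpa only [smul_smul, mul_comm _ (algebraMap ℝ S.SF (2 * beta))] using
    nablaLieNabla_of_lieNabla_eq_general S V (algebraMap ℝ S.SF (2 * beta) • S.xi)
      fun X Y => by rw [hyp, smul_smul, mul_comm]
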